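/- There exists a real number a with −3 < a < −2 satisfying a(a+1)³ + 3a + 1 = 0, and for this a the function g(z) = a(z−1)³/(1−3z) satisfies: g(1) = 0, g(0) = −a, and g(−a) = 1, so that 1 ↦ 0 ↦ −a ↦ 1 is a cycle of length three; moreover, for every complex z ≠ 1/3 the derivative of g vanishes at z if and only if z = 0 or z = 1. -/

import Mathlib

/-!
Writing out `g(-a) = 1` for `g(z) = a(z-1)³/(1-3z)` gives `a(a+1)³ + 3a + 1 = 0`, whose left-hand
side is `16` at `-3` and `-3` at `-2`, so the intermediate value theorem supplies `a`.
The numerator of `g'` is `a(z-1)²(3(1-3z) + 3(z-1)) = -6az(z-1)²`, so the only finite critical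
points are `0` and `1`.
-/

/-- The family of cubic rational maps `z ↦ a(z-1)³/(1-3z)` to which the blown-up airplane belongs.
At the pole, where `1 - 3z = 0`, the encoding takes the value `0`. -/
def blowupMap {K : Type*} [Field K] (a z : K) : K :=
  a * (z - 1) ^ 3 / (1 - 3 * z)

namespace blowupMap

section Field

variable {K : Type*} [Field K]

theorem one_sub_three_mul_eq_zero_iff (h3 : (3 : K) ≠ 0) {z : K} : 1 - 3 * z = 0 ↔ z = 1 / 3 := by
  rw [sub_eq_zero, eq_comm, eq_div_iff h3, mul_comm]

theorem apply_one (a : K) : blowupMap a 1 = 0 := by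
  simp [blowupMap]

theorem apply_zero (a : K) : blowupMap a 0 = -a := by
  norm_num [blowupMap]

theorem apply_neg_self_eq_one_iff {a : K} (h : 1 + 3 * a ≠ 0) :
    blowupMap a (-a) = 1 ↔ a * (a + 1) ^ 3 + 3 * a + 1 = 0 := by
  have value : blowupMap a (-a) = -(a * (a + 1) ^ 3) / (1 + 3 * a) := by
    unfold blowupMap
    congr 1 <;> ring
  rw [value, div_eq_one_iff_eq h, neg_eq_iff_add_eq_zero, add_comm 1, ← add_assoc]

end Field

section Derivative

variable {𝕜 : Type*} [NontriviallyNormedField 𝕜]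

theorem hasDerivAt (a : 𝕜) {z : 𝕜} (hz : 1 - 3 * z ≠ 0) :
    HasDerivAt (blowupMap a) (-6 * a * z * (z - 1) ^ 2 / (1 - 3 * z) ^ 2) z := by
  have numerator : HasDerivAt (fun w : 𝕜 ↦ a * (w - 1) ^ 3) (a * (3 * (z - 1) ^ 2)) z := by
    simpa using (((hasDerivAt_id z).sub_const 1).pow 3).const_mul a
  have denominator : HasDerivAt (fun w : 𝕜 ↦ 1 - 3 * w) (-3) z := by
    simpa using ((hasDerivAt_id z).const_mul (3 : 𝕜)).const_sub 1
  refine (numerator.div denominator hz).congr_deriv ?_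
  congr 1
  ring

theorem deriv_eq_zero_iff (h6 : (6 : 𝕜) ≠ 0) {a z : 𝕜} (ha : a ≠ 0) (hz : 1 - 3 * z ≠ 0) :
    deriv (blowupMap a) z = 0 ↔ z = 0 ∨ z = 1 := by
  rw [(hasDerivAt a hz).deriv]
  simp [h6, ha, hz, sub_eq_zero]

end Derivative

theorem exists_parameter_mem_Ioo :
    ∃ a ∈ Set.Ioo (-3 : ℝ) (-2), a * (a + 1) ^ 3 + 3 * a + 1 = 0 := by
  have zero_mem_image : (0 : ℝ) ∈
      (fun a : ℝ ↦ a * (a + 1) ^ 3 + 3 * a + 1) '' Set.Ioo (-3) (-2) :=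
    intermediate_value_Ioo' (by norm_num) (by fun_prop) (by norm_num)
  exact zero_mem_image

end blowupMap

/-- The cubic rational map obtained by blowing up the airplane: there is a real
`a ∈ (-3, -2)` with `a(a+1)³ + 3a + 1 = 0`, and for `g(z) = a(z-1)³/(1-3z)` one has the
cycle `1 ↦ 0 ↦ -a ↦ 1`; moreover away from the pole `1/3` the derivative of `g` vanishes
exactly at `0` and `1`. -/
theorem exists_airplane_blowup_map :
    ∃ a : ℝ, -3 < a ∧ a < -2 ∧ a * (a + 1) ^ 3 + 3 * a + 1 = 0 ∧
      (fun z : ℂ => (a : ℂ) * (z - 1) ^ 3 / (1 - 3 * z)) 1 = 0 ∧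
      (fun z : ℂ => (a : ℂ) * (z - 1) ^ 3 / (1 - 3 * z)) 0 = -(a : ℂ) ∧
      (fun z : ℂ => (a : ℂ) * (z - 1) ^ 3 / (1 - 3 * z)) (-(a : ℂ)) = 1 ∧
      ∀ z : ℂ, z ≠ 1 / 3 →
        (deriv (fun z : ℂ => (a : ℂ) * (z - 1) ^ 3 / (1 - 3 * z)) z = 0 ↔ z = 0 ∨ z = 1) := by
  obtain ⟨a, ⟨ha_lower, ha_upper⟩, ha_root⟩ := blowupMap.exists_parameter_mem_Ioo
  have ha : (a : ℂ) ≠ 0 := mod_cast (by linarith : a ≠ 0)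
  have h_denom : (1 + 3 * a : ℂ) ≠ 0 := mod_cast (by linarith : 1 + 3 * a ≠ 0)
  have h_cycle : blowupMap (a : ℂ) (-a) = 1 :=
    (blowupMap.apply_neg_self_eq_one_iff h_denom).2 (mod_cast ha_root)
  exact ⟨a, ha_lower, ha_upper, ha_root, blowupMap.apply_one _, blowupMap.apply_zero _, h_cycle,
    fun z hz ↦ blowupMap.deriv_eq_zero_iff (by norm_num) ha
      (mt (blowupMap.one_sub_three_mul_eq_zero_iff three_ne_zero).1 hz)⟩
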